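/- Fix a = 1, θ = 1, σa > 0, σm > 0 and ν ∈ [0,1]. Then F'_μ(ν, σa, σm, 1, 1)[0] = (4/(σm·σa)) · ∫₀^∞ arctan(σm·x/σa) · ( x·(1 + σm²·(1−ν)) − x³ ) · ρ̂0(x) dx, where ρ̂0(x) = ρ0[0](x)/Z[0] is the normalised symmetric stationary density. -/

import Mathlib

open MeasureTheory Real Set Filter

/-- Unnormalised stationary density ρ0[μ](x) of the McKean–Vlasov SDE
`dX = (aX − X³ − θ(X − m₁))dt + σa dB¹ + σm X ∘_ν dB²`. -/
noncomputable def rho0 (ν σa σm a θ μ x : ℝ) : ℝ :=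
  Real.exp (((a - θ - ν * σm ^ 2 + σa ^ 2 / σm ^ 2) / σm ^ 2) *
      Real.log (1 + (σm ^ 2 / σa ^ 2) * x ^ 2) +
    (2 * θ * μ / (σa * σm)) * Real.arctan (σm * x / σa) - x ^ 2 / σm ^ 2)

/-- Normalisation constant Z[μ] = ∫ ρ0[μ]. -/
noncomputable def Z (ν σa σm a θ μ : ℝ) : ℝ := ∫ x : ℝ, rho0 ν σa σm a θ μ x

/-- Self-consistency function F(ν,σa,σm,a,θ)[μ] = (∫ (x−μ)·ρ0[μ]) / Z[μ]. -/
noncomputable def F (ν σa σm a θ μ : ℝ) : ℝ :=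
  (∫ x : ℝ, (x - μ) * rho0 ν σa σm a θ μ x) / Z ν σa σm a θ μ

/-- F'_μ[0] : the derivative at μ = 0 of μ ↦ F(ν,σa,σm,a,θ)[μ]. -/
noncomputable def Fmu' (ν σa σm a θ : ℝ) : ℝ := deriv (fun μ => F ν σa σm a θ μ) 0

/-!
The density at `μ` is an exponential tilt of the density at `0`,
`ρ0[μ] = exp (μ g) ρ0[0]` with `g x = 2θ / (σa σm) * arctan (σm x / σa)` bounded. Differentiating
under the integral sign, and using that `ρ0[0]` is even, gives `F'_μ[0] = (∫ g x ρ0[0]) / Z[0] - 1`.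
On the other hand `ρ0[0]` satisfies the zero-flux Fokker–Planck equation
`((σa² + σm² x²) ρ)' = 2 ((a - θ + σm² (1 - ν)) x - x³) ρ`. Since
`(σa² + σm² x²) (arctan (σm x / σa))' = σm σa`, testing it against `arctan (σm x / σa)` expresses
the constant `1` as an integral against `ρ0[0] / Z[0]`; the terms in `θ` then cancel.
-/

section Parity

lemma integral_eq_zero_of_odd {G E : Type*} [AddGroup G] [MeasurableSpace G] [MeasurableNeg G]
    {m : Measure G} [m.IsNegInvariant] [NormedAddCommGroup E] [NormedSpace ℝ E] {f : G → E}
    (hf : Function.Odd f) : ∫ x, f x ∂m = 0 := by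
  have h : -∫ x, f x ∂m = ∫ x, f x ∂m := by
    simpa only [hf _, integral_neg] using integral_neg_eq_self f m
  have : IsAddTorsionFree E := .of_isTorsionFree ℝ E
  exact neg_eq_self.mp h

lemma integral_eq_two_mul_integral_Ioi_of_even {f : ℝ → ℝ} (hf : Function.Even f) :
    ∫ x, f x = 2 * ∫ x in Ioi (0 : ℝ), f x := by
  rw [← integral_comp_abs]
  congr 1 with x
  rcases abs_choice x with h | h
  · rw [h]
  · rw [h, hf]

end Parity

section ExponentialTilt

variable {α E : Type*} [MeasurableSpace α] {m : Measure α} [NormedAddCommGroup E]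
  [NormedSpace ℝ E] {f : α → E} {g : α → ℝ} {C : ℝ}

lemma exp_mul_le_exp_mul_of_abs_le {s u R C : ℝ} (hs : |s| ≤ R) (hu : |u| ≤ C) :
    exp (s * u) ≤ exp (R * C) := by
  refine exp_le_exp.mpr ((le_abs_self _).trans ?_)
  rw [abs_mul]
  exact mul_le_mul hs hu (abs_nonneg u) ((abs_nonneg s).trans hs)

lemma integrable_exp_mul_smul_of_bounded (hf : Integrable f m) (hg : AEStronglyMeasurable g m)
    (hC : ∀ᵐ x ∂m, |g x| ≤ C) (t : ℝ) : Integrable (fun x => exp (t * g x) • f x) m := by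
  refine hf.bdd_smul (exp (|t| * C))
    (continuous_exp.comp_aestronglyMeasurable (hg.const_mul t)) ?_
  filter_upwards [hC] with x hx
  rw [norm_eq_abs, abs_exp]
  exact exp_mul_le_exp_mul_of_abs_le le_rfl hx

lemma hasDerivAt_integral_exp_mul_smul_of_bounded (hf : Integrable f m)
    (hg : AEStronglyMeasurable g m) (hC : ∀ᵐ x ∂m, |g x| ≤ C) (t : ℝ) :
    HasDerivAt (fun s => ∫ x, exp (s * g x) • f x ∂m)
      (∫ x, g x • exp (t * g x) • f x ∂m) t := by
  have hint := integrable_exp_mul_smul_of_bounded hf hg hC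
  refine (hasDerivAt_integral_of_dominated_loc_of_deriv_le
    (F' := fun s x => g x • exp (s * g x) • f x)
    (bound := fun x => C * (exp ((|t| + 1) * C) * ‖f x‖))
    (Metric.ball_mem_nhds t one_pos) (Eventually.of_forall fun s => (hint s).aestronglyMeasurable)
    (hint t) (hg.smul (hint t).aestronglyMeasurable) ?_ ((hf.norm.const_mul _).const_mul C) ?_).2
  · filter_upwards [hC] with x hx s hs
    have hs' : |s| ≤ |t| + 1 := by
      have hdist : |s - t| < 1 := by simpa [Real.dist_eq] using hs
      linarith [abs_sub_abs_le_abs_sub s t]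
    rw [norm_smul, norm_smul, norm_eq_abs, norm_eq_abs, abs_exp]
    have hC0 : 0 ≤ C := (abs_nonneg _).trans hx
    exact mul_le_mul hx (mul_le_mul_of_nonneg_right
      (exp_mul_le_exp_mul_of_abs_le hs' hx) (norm_nonneg _)) (by positivity) hC0
  · refine ae_of_all _ fun x s _ => ?_
    have hexp := ((hasDerivAt_mul_const (g x)).exp (x := s)).smul_const (f x)
    rwa [mul_comm, mul_smul] at hexp

end ExponentialTilt

section GaussianDecay

lemma exists_mul_log_one_add_mul_sq_le (κ : ℝ) {b ε : ℝ} (hb : 0 ≤ b) (hε : 0 < ε) :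
    ∃ C, ∀ x : ℝ, κ * log (1 + b * x ^ 2) ≤ C + ε * x ^ 2 := by
  -- `log (e y) ≤ e y - 1` bounds `log y` by an affine function of slope `e`, which may be small.
  set e := ε / ((|κ| + 1) * (b + 1)) with he
  have he0 : 0 < e := by positivity
  refine ⟨|κ| * (e - 1 - log e), fun x => ?_⟩
  have hy : 1 ≤ 1 + b * x ^ 2 := le_add_of_nonneg_right (by positivity)
  have hlog : log (1 + b * x ^ 2) ≤ e * (1 + b * x ^ 2) - 1 - log e := by
    have h := log_le_sub_one_of_pos (mul_pos he0 (one_pos.trans_le hy))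
    rw [log_mul he0.ne' (one_pos.trans_le hy).ne'] at h
    linarith
  have hcoef : |κ| * (e * b) ≤ ε := by
    calc |κ| * (e * b) ≤ (|κ| + 1) * (e * (b + 1)) := by gcongr <;> linarith
      _ = ε := by rw [he]; field_simp
  calc κ * log (1 + b * x ^ 2) ≤ |κ| * log (1 + b * x ^ 2) :=
        mul_le_mul_of_nonneg_right (le_abs_self κ) (log_nonneg hy)
    _ ≤ |κ| * (e * (1 + b * x ^ 2) - 1 - log e) := by gcongr
    _ = |κ| * (e - 1 - log e) + |κ| * (e * b) * x ^ 2 := by ring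
    _ ≤ |κ| * (e - 1 - log e) + ε * x ^ 2 := by gcongr

lemma integrable_pow_mul_exp_mul_log_sub_mul_sq (κ : ℝ) {b c : ℝ} (hb : 0 ≤ b) (hc : 0 < c)
    (n : ℕ) : Integrable fun x : ℝ => x ^ n * exp (κ * log (1 + b * x ^ 2) - c * x ^ 2) := by
  obtain ⟨C, hC⟩ := exists_mul_log_one_add_mul_sq_le κ hb (half_pos hc)
  have hgauss : Integrable fun x : ℝ => exp C * (x ^ n * exp (-(c / 2) * x ^ 2)) := by
    have h := integrable_rpow_mul_exp_neg_mul_sq (half_pos hc) (s := n)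
      (by linarith [n.cast_nonneg (α := ℝ)])
    simpa only [rpow_natCast] using h.const_mul (exp C)
  refine hgauss.mono (by fun_prop) (ae_of_all _ fun x => ?_)
  have hexp : exp (κ * log (1 + b * x ^ 2) - c * x ^ 2) ≤ exp C * exp (-(c / 2) * x ^ 2) := by
    rw [← exp_add, exp_le_exp]
    linarith [hC x]
  simp only [norm_mul, norm_eq_abs, abs_exp]
  calc |x ^ n| * exp (κ * log (1 + b * x ^ 2) - c * x ^ 2)
      ≤ |x ^ n| * (exp C * exp (-(c / 2) * x ^ 2)) := by gcongr
    _ = exp C * (|x ^ n| * exp (-(c / 2) * x ^ 2)) := by ring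

end GaussianDecay

lemma abs_arctan_le (x : ℝ) : |arctan x| ≤ π / 2 :=
  abs_le.mpr ⟨(neg_pi_div_two_lt_arctan x).le, (arctan_lt_pi_div_two x).le⟩

lemma abs_mul_arctan_le (c x : ℝ) : |c * arctan x| ≤ |c| * (π / 2) := by
  rw [abs_mul]
  exact mul_le_mul_of_nonneg_left (abs_arctan_le x) (abs_nonneg c)

lemma integrable_arctan_mul {f : ℝ → ℝ} (hf : Integrable f) (r s : ℝ) :
    Integrable fun x => arctan (r * x / s) * f x :=
  hf.bdd_mul (by fun_prop) (ae_of_all _ fun _ => abs_arctan_le _)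

lemma hasDerivAt_arctan_mul_div (r : ℝ) {s : ℝ} (hs : s ≠ 0) (x : ℝ) :
    HasDerivAt (fun x => arctan (r * x / s)) (r * s / (s ^ 2 + r ^ 2 * x ^ 2)) x := by
  refine ((hasDerivAt_const_mul r).div_const s).arctan.congr_deriv ?_
  field_simp

section Density

variable (ν σa σm a θ : ℝ)

lemma mul_rho0_eq_exp_smul (μ x y : ℝ) : y * rho0 ν σa σm a θ μ x =
    exp (μ * (2 * θ / (σa * σm) * arctan (σm * x / σa))) • (y * rho0 ν σa σm a θ 0 x) := by
  rw [smul_eq_mul, mul_left_comm, rho0, rho0, ← exp_add]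
  ring_nf

lemma rho0_zero_even : Function.Even (rho0 ν σa σm a θ 0) := fun x => by
  simp only [rho0, mul_zero, zero_div, zero_mul, even_two, Even.neg_pow]

variable {σm}

lemma integrable_pow_mul_rho0_zero (hσm : σm ≠ 0) (n : ℕ) :
    Integrable fun x => x ^ n * rho0 ν σa σm a θ 0 x := by
  convert integrable_pow_mul_exp_mul_log_sub_mul_sq
    ((a - θ - ν * σm ^ 2 + σa ^ 2 / σm ^ 2) / σm ^ 2) (b := σm ^ 2 / σa ^ 2) (c := 1 / σm ^ 2)
    (by positivity) (by positivity) n using 3 with x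
  rw [rho0]
  ring_nf

lemma integrable_pow_mul_rho0 (hσm : σm ≠ 0) (μ : ℝ) (n : ℕ) :
    Integrable fun x => x ^ n * rho0 ν σa σm a θ μ x := by
  have h := integrable_exp_mul_smul_of_bounded
    (integrable_pow_mul_rho0_zero ν σa a θ hσm n) (by fun_prop)
    (ae_of_all _ fun x => abs_mul_arctan_le (2 * θ / (σa * σm)) (σm * x / σa)) μ
  simpa only [← mul_rho0_eq_exp_smul] using h

lemma hasDerivAt_integral_pow_mul_rho0 (hσm : σm ≠ 0) (μ : ℝ) (n : ℕ) :
    HasDerivAt (fun μ => ∫ x, x ^ n * rho0 ν σa σm a θ μ x)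
      (2 * θ / (σa * σm) * ∫ x, arctan (σm * x / σa) * (x ^ n * rho0 ν σa σm a θ μ x)) μ := by
  have h := hasDerivAt_integral_exp_mul_smul_of_bounded
    (integrable_pow_mul_rho0_zero ν σa a θ hσm n) (by fun_prop)
    (ae_of_all _ fun x => abs_mul_arctan_le (2 * θ / (σa * σm)) (σm * x / σa)) μ
  simp only [← mul_rho0_eq_exp_smul] at h
  simpa only [smul_eq_mul, mul_assoc, integral_const_mul] using h

lemma integrable_rho0 (hσm : σm ≠ 0) (μ : ℝ) : Integrable (rho0 ν σa σm a θ μ) := by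
  simpa only [pow_zero, one_mul] using integrable_pow_mul_rho0 ν σa a θ hσm μ 0

lemma integrable_id_mul_rho0 (hσm : σm ≠ 0) (μ : ℝ) :
    Integrable fun x => x * rho0 ν σa σm a θ μ x := by
  simpa only [pow_one] using integrable_pow_mul_rho0 ν σa a θ hσm μ 1

lemma Z_pos (hσm : σm ≠ 0) (μ : ℝ) : 0 < Z ν σa σm a θ μ :=
  integral_exp_pos (integrable_rho0 ν σa a θ hσm μ)

lemma F_eq_mean_sub (hσm : σm ≠ 0) (μ : ℝ) : F ν σa σm a θ μ =
    (∫ x, x * rho0 ν σa σm a θ μ x) / Z ν σa σm a θ μ - μ := by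
  have hZ := (Z_pos ν σa a θ hσm μ).ne'
  rw [F, div_sub' hZ]
  simp only [sub_mul]
  rw [integral_sub (integrable_id_mul_rho0 ν σa a θ hσm μ)
    ((integrable_rho0 ν σa a θ hσm μ).const_mul μ), integral_const_mul, ← Z, mul_comm μ]

lemma hasDerivAt_F_zero (hσm : σm ≠ 0) : HasDerivAt (F ν σa σm a θ)
    (2 * θ / (σa * σm) * (∫ x, arctan (σm * x / σa) * (x * rho0 ν σa σm a θ 0 x)) /
      Z ν σa σm a θ 0 - 1) 0 := by
  have hM := hasDerivAt_integral_pow_mul_rho0 ν σa a θ hσm 0 1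
  have hZ := hasDerivAt_integral_pow_mul_rho0 ν σa a θ hσm 0 0
  simp only [pow_zero, one_mul, pow_one] at hM hZ
  have hmean : ∫ x, x * rho0 ν σa σm a θ 0 x = 0 :=
    integral_eq_zero_of_odd fun x => by rw [rho0_zero_even, neg_mul]
  have hZ0 := (Z_pos ν σa a θ hσm 0).ne'
  rw [funext (F_eq_mean_sub ν σa a θ hσm)]
  refine ((hM.div hZ hZ0).sub (hasDerivAt_id 0)).congr_deriv ?_
  rw [hmean, ← Z]
  field_simp
  ring

lemma integrable_drift_mul_rho0 (hσm : σm ≠ 0) (μ : ℝ) : Integrable fun x =>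
    2 * (x * (a + σm ^ 2 * (1 - ν)) - x ^ 3 - θ * (x - μ)) * rho0 ν σa σm a θ μ x := by
  have hmoment := integrable_pow_mul_rho0 ν σa a θ hσm μ
  refine ((((hmoment 1).const_mul (2 * (a + σm ^ 2 * (1 - ν) - θ))).sub
    ((hmoment 3).const_mul 2)).add ((hmoment 0).const_mul (2 * θ * μ))).congr
    (ae_of_all _ fun x => ?_)
  simp only [Pi.add_apply, Pi.sub_apply]
  ring

variable {σa}

lemma hasDerivAt_diffusion_mul_rho0 (hσa : σa ≠ 0) (hσm : σm ≠ 0) (μ x : ℝ) :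
    HasDerivAt (fun x => (σa ^ 2 + σm ^ 2 * x ^ 2) * rho0 ν σa σm a θ μ x)
      (2 * (x * (a + σm ^ 2 * (1 - ν)) - x ^ 3 - θ * (x - μ)) * rho0 ν σa σm a θ μ x) x := by
  have hD : σa ^ 2 + σm ^ 2 * x ^ 2 ≠ 0 := by positivity
  have hlog_arg : 1 + σm ^ 2 / σa ^ 2 * x ^ 2 = (σa ^ 2 + σm ^ 2 * x ^ 2) / σa ^ 2 := by field_simp
  have hsq : HasDerivAt (fun x : ℝ => x ^ 2) (2 * x) x := by simpa using hasDerivAt_pow 2 x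
  have hlog := ((hsq.const_mul (σm ^ 2 / σa ^ 2)).const_add 1).log (by positivity)
  have hexponent := ((hlog.const_mul ((a - θ - ν * σm ^ 2 + σa ^ 2 / σm ^ 2) / σm ^ 2)).add
    ((hasDerivAt_arctan_mul_div σm hσa x).const_mul (2 * θ * μ / (σa * σm)))).sub
    (hsq.div_const (σm ^ 2))
  have hrho : HasDerivAt (rho0 ν σa σm a θ μ) _ x := hexponent.exp
  refine (((hsq.const_mul (σm ^ 2)).const_add (σa ^ 2)).mul hrho).congr_deriv ?_
  -- The exponential is folded back into `rho0` so that `field_simp` treats it as an atom.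
  change _ + _ * (rho0 ν σa σm a θ μ x * _) = _
  rw [hlog_arg]
  field_simp
  ring

lemma integral_arctan_mul_drift (hσa : σa ≠ 0) (hσm : σm ≠ 0) (μ : ℝ) :
    ∫ x, arctan (σm * x / σa) *
      (2 * (x * (a + σm ^ 2 * (1 - ν)) - x ^ 3 - θ * (x - μ)) * rho0 ν σa σm a θ μ x) =
    -(σm * σa * Z ν σa σm a θ μ) := by
  have hmoment := integrable_pow_mul_rho0 ν σa a θ hσm μ
  have hdiffusion : Integrable fun x => (σa ^ 2 + σm ^ 2 * x ^ 2) * rho0 ν σa σm a θ μ x :=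
    (((hmoment 0).const_mul (σa ^ 2)).add ((hmoment 2).const_mul (σm ^ 2))).congr
      (ae_of_all _ fun x => by simp only [Pi.add_apply]; ring)
  have hdrift := integrable_drift_mul_rho0 ν σa a θ hσm μ
  have hcancel (x : ℝ) : σm * σa / (σa ^ 2 + σm ^ 2 * x ^ 2) *
      ((σa ^ 2 + σm ^ 2 * x ^ 2) * rho0 ν σa σm a θ μ x) = σm * σa * rho0 ν σa σm a θ μ x := by
    field_simp
  rw [integral_mul_deriv_eq_deriv_mul_of_integrable
    (fun x _ => hasDerivAt_arctan_mul_div σm hσa x)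
    (fun x _ => hasDerivAt_diffusion_mul_rho0 ν a θ hσa hσm μ x)
    (integrable_arctan_mul hdrift σm σa) ?_ (integrable_arctan_mul hdiffusion σm σa)]
  · simp only [hcancel, integral_const_mul, Z]
  · exact ((integrable_rho0 ν σa a θ hσm μ).const_mul (σm * σa)).congr
      (ae_of_all _ fun x => (hcancel x).symm)

lemma arctan_moment_eq_integral_Ioi (hσa : σa ≠ 0) (hσm : σm ≠ 0) :
    2 * θ * (∫ x, arctan (σm * x / σa) * (x * rho0 ν σa σm a θ 0 x)) - σm * σa * Z ν σa σm a θ 0 =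
      4 * ∫ x in Ioi (0 : ℝ), arctan (σm * x / σa) *
        (x * (a + σm ^ 2 * (1 - ν)) - x ^ 3) * rho0 ν σa σm a θ 0 x := by
  have heven : Function.Even fun x => arctan (σm * x / σa) *
      (x * (a + σm ^ 2 * (1 - ν)) - x ^ 3) * rho0 ν σa σm a θ 0 x := fun x => by
    simp only [rho0_zero_even ν σa σm a θ x, mul_neg, neg_div, arctan_neg]
    ring
  calc _ = 2 * θ * (∫ x, arctan (σm * x / σa) * (x * rho0 ν σa σm a θ 0 x)) +
        ∫ x, arctan (σm * x / σa) * (2 * (x * (a + σm ^ 2 * (1 - ν)) - x ^ 3 - θ * (x - 0)) *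
          rho0 ν σa σm a θ 0 x) := by
        rw [integral_arctan_mul_drift ν a θ hσa hσm 0, sub_eq_add_neg]
    _ = ∫ x, 2 * (arctan (σm * x / σa) *
        (x * (a + σm ^ 2 * (1 - ν)) - x ^ 3) * rho0 ν σa σm a θ 0 x) := by
        rw [← integral_const_mul, ← integral_add
          ((integrable_arctan_mul (integrable_id_mul_rho0 ν σa a θ hσm 0) σm σa).const_mul (2 * θ))
          (integrable_arctan_mul (integrable_drift_mul_rho0 ν σa a θ hσm 0) σm σa)]
        congr 1 with x
        ring
    _ = _ := by
        rw [integral_const_mul, integral_eq_two_mul_integral_Ioi_of_even heven]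
        ring

end Density

theorem stmt10_general (a θ ν : ℝ) {σa σm : ℝ} (hσa : σa ≠ 0) (hσm : σm ≠ 0) :
    HasDerivAt (F ν σa σm a θ)
      ((4 / (σm * σa)) * ∫ x in Ioi (0 : ℝ),
        arctan (σm * x / σa) * (x * (a + σm ^ 2 * (1 - ν)) - x ^ 3) *
          (rho0 ν σa σm a θ 0 x / Z ν σa σm a θ 0)) 0 := by
  refine (hasDerivAt_F_zero ν σa a θ hσm).congr_deriv ?_
  have hZ := (Z_pos ν σa a θ hσm 0).ne'
  simp only [mul_div_assoc', integral_div]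
  rw [div_mul_eq_mul_div 4, ← arctan_moment_eq_integral_Ioi ν a θ hσa hσm]
  field_simp

/-- With a = θ = 1, F'_μ[0] equals (4/(σm·σa)) times the integral over (0,∞) of
arctan(σm·x/σa)·(x·(1 + σm²(1−ν)) − x³) against the normalised symmetric stationary density. -/
theorem stmt10 (σa σm ν : ℝ) (hσa : 0 < σa) (hσm : 0 < σm) (hν : ν ∈ Set.Icc (0 : ℝ) 1) :
    Fmu' ν σa σm 1 1 =
      (4 / (σm * σa)) * ∫ x in Set.Ioi (0 : ℝ),
        Real.arctan (σm * x / σa) * (x * (1 + σm ^ 2 * (1 - ν)) - x ^ 3) *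
          (rho0 ν σa σm 1 1 0 x / Z ν σa σm 1 1 0) :=
  (stmt10_general 1 1 ν hσa.ne' hσm.ne').deriv
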